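/- If a finite simple graph G contains a cycle of length 3, 4, or 7 as a subgraph, then τ₂(G) ≥ 6. -/

import Mathlib

/-- A `t`-tone `k`-coloring of a simple graph `G`: each vertex gets a set of `t`
distinct colors from `{1,…,k}`, and any two distinct vertices in the same
connected component share fewer colors than their distance. -/
def IsTToneColoring {V : Type*} (G : SimpleGraph V) (t k : ℕ) (f : V → Finset ℕ) : Prop :=
  (∀ v, f v ⊆ Finset.Icc 1 k ∧ (f v).card = t) ∧
  ∀ u v : V, u ≠ v → G.Reachable u v → ((f u) ∩ (f v)).card < G.dist u v

/-- The `t`-tone chromatic number: the least `k` admitting a `t`-tone `k`-coloring. -/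
noncomputable def toneNumber {V : Type*} (G : SimpleGraph V) (t : ℕ) : ℕ :=
  sInf {k | ∃ f : V → Finset ℕ, IsTToneColoring G t k f}

/-!
Let `A` be the set of vertices of a cycle `C_n` carrying a given color. Since `A` is independent,
among three consecutive vertices at most one lies in `A`, unless it is the two outer ones; hence
`3 |A| ≤ n + d`, where `d` counts the pairs of `A` two steps apart. When `n ≡ 0, 1 (mod 3)`,
integrality improves this to `2 |A| ≤ d + 2 ⌊n / 3⌋`. Vertices two steps apart share at most one
color, so the numbers `d` sum to at most `n`, and summing over the `k` colors of a `t`-tone coloring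
gives `2 t n ≤ n + 2 k ⌊n / 3⌋`. For `t = 2` and `n = 4, 7` this forces `k ≥ 6`. The triangle is a
clique, whose vertices carry disjoint sets of colors.
-/

section ColorClasses

open Finset

variable {α β : Type*} [Fintype α] [DecidableEq β]

lemma three_mul_card_le_card_add_card_filter [DecidableEq α] (σ : Equiv.Perm α) {A : Finset α}
    (hA : ∀ i ∈ A, σ i ∉ A) :
    3 * #A ≤ Fintype.card α + #{i ∈ A | σ (σ i) ∈ A} := by
  let indicator (i : α) : ℕ := if i ∈ A then 1 else 0
  have sum_indicator : ∑ i, indicator i = #A := by simp [indicator]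
  have sum_indicator_two_steps : ∑ i, indicator (σ (σ i)) = ∑ i, indicator i :=
    Equiv.sum_comp (σ.trans σ) indicator
  calc
    3 * #A = ∑ i, (indicator i + indicator (σ i) + indicator (σ (σ i))) := by
      rw [sum_add_distrib, sum_add_distrib, sum_indicator_two_steps, Equiv.sum_comp σ indicator,
        sum_indicator]
      ring
    _ ≤ ∑ i, (1 + if i ∈ A ∧ σ (σ i) ∈ A then 1 else 0) := by
      refine sum_le_sum fun i _ => ?_
      have not_both := hA i
      have not_both_next := hA (σ i)
      grind
    _ = Fintype.card α + #{i ∈ A | σ (σ i) ∈ A} := by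
      rw [sum_add_distrib, ← card_filter, ← filter_filter, filter_univ_mem]
      simp

lemma two_mul_card_le_card_filter_add [DecidableEq α] (hα : Fintype.card α % 3 ≤ 1)
    (σ : Equiv.Perm α) {A : Finset α} (hA : ∀ i ∈ A, σ i ∉ A) :
    2 * #A ≤ #{i ∈ A | σ (σ i) ∈ A} + 2 * (Fintype.card α / 3) := by
  have := three_mul_card_le_card_add_card_filter σ hA
  omega

lemma sum_card_filter_mem_eq_sum_card {C : Finset β} {g : α → Finset β} (hg : ∀ i, g i ⊆ C) :
    ∑ c ∈ C, #{i | c ∈ g i} = ∑ i, #(g i) := by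
  calc
    ∑ c ∈ C, #{i | c ∈ g i} = ∑ i, #{c ∈ C | c ∈ g i} :=
      sum_card_bipartiteAbove_eq_sum_card_bipartiteBelow fun c i => c ∈ g i
    _ = ∑ i, #(g i) := by simp only [filter_mem_eq_inter, inter_eq_right.2 (hg _)]

lemma two_mul_sum_card_le_sum_card_inter_add (hα : Fintype.card α % 3 ≤ 1) (σ : Equiv.Perm α)
    {C : Finset β} {g : α → Finset β} (hg : ∀ i, g i ⊆ C)
    (hdisj : ∀ i, Disjoint (g i) (g (σ i))) :
    2 * ∑ i, #(g i) ≤ ∑ i, #(g i ∩ g (σ (σ i))) + 2 * #C * (Fintype.card α / 3) := by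
  classical
  have class_bound (c : β) :
      2 * #{i | c ∈ g i} ≤ #{i | c ∈ g i ∩ g (σ (σ i))} + 2 * (Fintype.card α / 3) := by
    have independent : ∀ i ∈ ({i | c ∈ g i} : Finset α), σ i ∉ ({i | c ∈ g i} : Finset α) := by
      simpa using fun i (hc : c ∈ g i) => disjoint_left.1 (hdisj i) hc
    simpa [filter_filter] using two_mul_card_le_card_filter_add hα σ independent
  calc
    2 * ∑ i, #(g i) = ∑ c ∈ C, 2 * #{i | c ∈ g i} := by
      rw [← sum_card_filter_mem_eq_sum_card hg, mul_sum]
    _ ≤ ∑ c ∈ C, (#{i | c ∈ g i ∩ g (σ (σ i))} + 2 * (Fintype.card α / 3)) :=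
      sum_le_sum fun c _ => class_bound c
    _ = ∑ i, #(g i ∩ g (σ (σ i))) + 2 * #C * (Fintype.card α / 3) := by
      rw [sum_add_distrib,
        sum_card_filter_mem_eq_sum_card fun i => inter_subset_left.trans (hg i),
        sum_const, smul_eq_mul]
      ring

end ColorClasses

namespace IsTToneColoring

open Finset SimpleGraph

variable {V : Type*} {G : SimpleGraph V} {t k : ℕ} {f : V → Finset ℕ}

lemma disjoint_of_adj (hf : IsTToneColoring G t k f) {u v : V} (huv : G.Adj u v) :
    Disjoint (f u) (f v) := by
  have card_lt := hf.2 u v huv.ne huv.reachable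
  rwa [dist_eq_one_iff_adj.2 huv, Nat.lt_one_iff, card_eq_zero,
    ← disjoint_iff_inter_eq_empty] at card_lt

lemma card_inter_le_one_of_adj_of_adj (hf : IsTToneColoring G t k f) {u v w : V}
    (huv : G.Adj u v) (hvw : G.Adj v w) (huw : u ≠ w) : #(f u ∩ f w) ≤ 1 := by
  have card_lt := hf.2 u w huw (huv.reachable.trans hvw.reachable)
  have dist_le_two : G.dist u w ≤ 2 := dist_le (.cons huv (.cons hvw .nil))
  omega

lemma card_mul_le_of_isClique (hf : IsTToneColoring G t k f) {s : Finset V}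
    (hs : G.IsClique (s : Set V)) : #s * t ≤ k := by
  have pairwise_disjoint : (s : Set V).PairwiseDisjoint f :=
    fun _ hu _ hv huv => hf.disjoint_of_adj (hs hu hv huv)
  calc
    #s * t = #(s.biUnion f) := by
      rw [card_biUnion pairwise_disjoint, sum_const_nat fun v _ => (hf.1 v).2]
    _ ≤ #(Icc 1 k) := card_le_card (biUnion_subset.2 fun v _ => (hf.1 v).1)
    _ = k := by simp

lemma three_mul_le_of_cycleGraph_three_isContained (hf : IsTToneColoring G t k f)
    (hG : cycleGraph 3 ⊑ G) : 3 * t ≤ k := by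
  rw [cycleGraph_three_eq_top, ← not_cliqueFree_iff_top_isContained] at hG
  obtain ⟨s, hs⟩ := not_forall_not.1 hG
  simpa [hs.card_eq] using hf.card_mul_le_of_isClique hs.isClique

lemma two_mul_mul_le_of_cycleGraph_isContained (hf : IsTToneColoring G t k f) {n : ℕ}
    (hn : 3 ≤ n) (hmod : n % 3 ≤ 1) (hG : cycleGraph n ⊑ G) :
    2 * (n * t) ≤ n + 2 * k * (n / 3) := by
  obtain ⟨m, rfl⟩ := Nat.exists_eq_add_of_le' hn
  obtain ⟨φ⟩ := hG
  let σ : Equiv.Perm (Fin (m + 3)) := Equiv.addRight 1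
  have adj_next (i : Fin (m + 3)) : G.Adj (φ i) (φ (σ i)) :=
    φ.toHom.map_adj (by simp [cycleGraph_adj, σ])
  have ne_two_steps (i : Fin (m + 3)) : φ i ≠ φ (σ (σ i)) := by
    refine φ.injective.ne ?_
    simp [σ, add_assoc, Fin.ext_iff, Fin.val_add, Nat.mod_eq_of_lt]
  have card_inter_two_steps : ∑ i, #(f (φ i) ∩ f (φ (σ (σ i)))) ≤ m + 3 := by
    simpa using sum_le_card_nsmul univ _ 1 fun i _ =>
      hf.card_inter_le_one_of_adj_of_adj (adj_next i) (adj_next (σ i)) (ne_two_steps i)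
  have class_sum := two_mul_sum_card_le_sum_card_inter_add (by simpa using hmod) σ
    (fun i => (hf.1 (φ i)).1) fun i => hf.disjoint_of_adj (adj_next i)
  simp only [(hf.1 _).2, sum_const, card_univ, Fintype.card_fin, smul_eq_mul, Nat.card_Icc,
    Nat.add_sub_cancel] at class_sum
  exact class_sum.trans (Nat.add_le_add_right card_inter_two_steps _)

end IsTToneColoring

lemma exists_isTToneColoring {V : Type*} [Finite V] (G : SimpleGraph V) (t : ℕ) :
    ∃ k, ∃ f : V → Finset ℕ, IsTToneColoring G t k f := by
  obtain ⟨n, ⟨e⟩⟩ := Finite.exists_equiv_fin V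
  let block (i : ℕ) : Finset ℕ := Finset.Ioc (i * t) ((i + 1) * t)
  have block_start_mono : Monotone (· * t) := fun _ _ hij => Nat.mul_le_mul_right t hij
  have block_disjoint : Pairwise (Function.onFun Disjoint block) := fun i j hij => by
    simpa [block, ← Finset.disjoint_coe] using
      block_start_mono.pairwise_disjoint_on_Ioc_succ hij
  refine ⟨n * t, fun v => block (e v), fun v => ⟨fun c hc => ?_, ?_⟩, fun u v huv hreach => ?_⟩
  · have block_end_le : (e v + 1) * t ≤ n * t := Nat.mul_le_mul_right t (e v).isLt
    simp only [block, Finset.mem_Ioc, Finset.mem_Icc] at hc ⊢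
    omega
  · simp [block, add_mul]
  · have disjoint := block_disjoint (Fin.val_injective.ne (e.injective.ne huv))
    rw [Finset.disjoint_iff_inter_eq_empty.1 disjoint, Finset.card_empty]
    exact hreach.pos_dist_of_ne huv

/-- If a finite simple graph `G` contains a cycle of length 3, 4, or 7 as a
subgraph, then `τ₂(G) ≥ 6`. -/
theorem stmt14 {V : Type*} [Fintype V] (G : SimpleGraph V)
    (h : ∃ n : ℕ, (n = 3 ∨ n = 4 ∨ n = 7) ∧
      ∃ φ : Fin n ↪ V, ∀ u v : Fin n,
        (SimpleGraph.cycleGraph n).Adj u v → G.Adj (φ u) (φ v)) :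
    6 ≤ toneNumber G 2 := by
  obtain ⟨n, hn, φ, hφ⟩ := h
  have contains_cycle : SimpleGraph.IsContained (SimpleGraph.cycleGraph n) G :=
    ⟨⟨⟨φ, hφ _ _⟩, φ.injective⟩⟩
  refine le_csInf (exists_isTToneColoring G 2) ?_
  rintro k ⟨f, hf⟩
  rcases hn with rfl | rfl | rfl
  · exact hf.three_mul_le_of_cycleGraph_three_isContained contains_cycle
  · have := hf.two_mul_mul_le_of_cycleGraph_isContained (by simp) (by simp) contains_cycle
    omega
  · have := hf.two_mul_mul_le_of_cycleGraph_isContained (by simp) (by simp) contains_cycle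
    omega
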